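/- If DC holds and L_3 is finite, then for every integer k ≥ 3 the sequence r ↦ R_r(k)^{1/r} / R_r(k−1)^{1/r} converges to the finite real number L_k / L_{k−1}, and this limit is strictly greater than 1. -/

import Mathlib

open Filter Topology
open scoped ENNReal

/-- `N` has the Ramsey property for the tuple `k`: every `r`-coloring of the
edges of the complete graph on `N` vertices admits a color `i` and a set of
`k i` vertices all of whose connecting edges have color `i`. -/
def ramseyProp {r : ℕ} (k : Fin r → ℕ) (N : ℕ) : Prop :=
  ∀ c : Sym2 (Fin N) → Fin r, ∃ i : Fin r, ∃ S : Finset (Fin N),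
    S.card = k i ∧ ∀ u ∈ S, ∀ v ∈ S, u ≠ v → c s(u, v) = i

/-- The multicolor Ramsey number `R(k 0, …, k (r-1))`: the least positive `N`
with the Ramsey property. -/
noncomputable def multiRamsey {r : ℕ} (k : Fin r → ℕ) : ℕ :=
  sInf {N | 0 < N ∧ ramseyProp k N}

/-- The diagonal multicolor Ramsey number `R_r(k)`. -/
noncomputable def diagRamsey (r k : ℕ) : ℕ :=
  multiRamsey (fun _ : Fin r => k)

/-- DC, the "decreasing conjecture". -/
def DC : Prop :=
  ∀ (r : ℕ), 2 ≤ r → ∀ k : Fin r → ℕ, (∀ l, 2 ≤ k l) →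
    ∀ i j : Fin r, i ≠ j → 3 ≤ k i → k i ≤ k j →
      multiRamsey (fun l => if l = i then k i - 1 else if l = j then k j + 1 else k l)
        ≤ multiRamsey k

/-!
Start from the diagonal tuple of `2r` entries `k + 1` and pair the colors up. Applying DC once to
each pair turns `(k + 1, k + 1)` into `(k, k + 2)`, so `R_{2r}(k + 1)` is at least the Ramsey number
of the tuple with `r` entries `k` and `r` entries `k + 2`, which by the lexicographic product
coloring exceeds `(R_r(k) - 1) (R_r(k + 2) - 1)`. Taking `r`-th roots shows that `L` is
log-concave: `L_k L_{k+2} ≤ L_{k+1}²`. As `L_2 = 1`, finiteness of `L_3` therefore propagates to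
all `L_k`. A log-concave sequence that once fails to increase is bounded from then on, whereas
`L_{m+1} ≥ m`: take the functions from the `r` colors to an `m`-element set as vertices and color
each pair by a coordinate where the two functions differ. Hence `L` is strictly increasing.
-/

/-- The graph of the edges to which the coloring `c` gives the color `i`; the values of `c` on the
diagonal play no role. -/
def colorClass {ι V : Type*} (c : Sym2 V → ι) (i : ι) : SimpleGraph V :=
  SimpleGraph.fromEdgeSet (c ⁻¹' {i})

/-- The arrow relation `V → (k i)_i` of Ramsey theory, which is `ramseyProp` for arbitrary types of
vertices and colors: every edge coloring of the complete graph on `V` has, for some color `i`, a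
monochromatic clique of `k i` vertices. -/
def Arrows {ι : Type*} (k : ι → ℕ) (V : Type*) : Prop :=
  ∀ c : Sym2 V → ι, ∃ i, ¬ (colorClass c i).CliqueFree (k i)

/-- The Ramsey number of a tuple indexed by an arbitrary type of colors, so that tuples can be
reindexed and concatenated without arithmetic in `Fin r`. -/
noncomputable def ramseyNumber {ι : Type*} (k : ι → ℕ) : ℕ :=
  sInf {N | 0 < N ∧ Arrows k (Fin N)}

section Arrows

open Function

variable {ι κ V W : Type*}

theorem cliqueFree_of_hom {G : SimpleGraph V} {H : SimpleGraph W} {n : ℕ} (f : H →g G)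
    (hG : G.CliqueFree n) : H.CliqueFree n := by
  contrapose hG
  obtain ⟨g⟩ := (SimpleGraph.not_cliqueFree_iff_top_isContained n).1 hG
  exact (SimpleGraph.not_cliqueFree_iff_top_isContained n).2
    ⟨⟨f.comp g.toHom, SimpleGraph.Hom.injective_of_top_hom _⟩⟩

@[simp]
theorem colorClass_adj {c : Sym2 V → ι} {i : ι} {u v : V} :
    (colorClass c i).Adj u v ↔ c s(u, v) = i ∧ u ≠ v := by
  simp [colorClass]

theorem not_cliqueFree_colorClass_iff {c : Sym2 V → ι} {i : ι} {n : ℕ} :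
    ¬ (colorClass c i).CliqueFree n ↔
      ∃ S : Finset V, S.card = n ∧ ∀ u ∈ S, ∀ v ∈ S, u ≠ v → c s(u, v) = i := by
  simp +contextual [SimpleGraph.CliqueFree, SimpleGraph.isNClique_iff, SimpleGraph.isClique_iff,
    Set.Pairwise, and_comm]

theorem colorClass_comp_map_cliqueFree {c : Sym2 W → ι} {i : ι} {n : ℕ} (f : V ↪ W)
    (h : (colorClass c i).CliqueFree n) : (colorClass (c ∘ Sym2.map f) i).CliqueFree n :=
  cliqueFree_of_hom ⟨f, by simp⟩ h

theorem colorClass_equiv_comp (e : κ ≃ ι) (c : Sym2 V → κ) (i : ι) :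
    colorClass (e ∘ c) i = colorClass c (e.symm i) := by
  ext u v
  simp [Equiv.eq_symm_apply]

theorem Arrows.of_embedding {k : ι → ℕ} (h : Arrows k V) (f : V ↪ W) : Arrows k W := fun c =>
  (h (c ∘ Sym2.map f)).imp fun _ => mt (colorClass_comp_map_cliqueFree f)

theorem Arrows.nonempty {k : ι → ℕ} (h : Arrows k V) (hk : ∀ i, 0 < k i) : Nonempty V := by
  by_contra! hV
  obtain ⟨i, hi⟩ := h isEmptyElim
  have := Fintype.ofIsEmpty (α := V)
  exact hi (SimpleGraph.cliqueFree_of_card_lt (by simpa using hk i))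

theorem Arrows.comp_equiv {k : ι → ℕ} (h : Arrows k V) (e : κ ≃ ι) : Arrows (k ∘ e) V := by
  intro c
  obtain ⟨i, hi⟩ := h (e ∘ c)
  exact ⟨e.symm i, by simpa [colorClass_equiv_comp] using hi⟩

theorem arrows_comp_equiv_iff {k : ι → ℕ} (e : κ ≃ ι) : Arrows (k ∘ e) V ↔ Arrows k V :=
  ⟨fun h => by simpa [comp_assoc] using h.comp_equiv e.symm, fun h => h.comp_equiv e⟩

theorem ramseyNumber_comp_equiv (k : ι → ℕ) (e : κ ≃ ι) :
    ramseyNumber (k ∘ e) = ramseyNumber k := by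
  simp only [ramseyNumber, arrows_comp_equiv_iff]

theorem exists_le_card_neighborSet_colorClass [Fintype ι] [Fintype V] {N : ι → ℕ}
    (hV : ∑ i, N i < Fintype.card V) (c : Sym2 V → ι) (v : V) :
    ∃ i, N i ≤ Nat.card ((colorClass c i).neighborSet v) := by
  classical
  have hcard : ∑ i, Nat.card ((colorClass c i).neighborSet v) = Fintype.card V - 1 := by
    rw [← Finset.card_univ, ← Finset.card_erase_of_mem (Finset.mem_univ v),
      Finset.card_eq_sum_card_fiberwise (f := fun w => c s(v, w)) (t := Finset.univ)
        (by simp [Set.MapsTo])]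
    refine Finset.sum_congr rfl fun i _ => ?_
    rw [Nat.card_eq_fintype_card]
    refine Fintype.card_of_subtype _ fun w => ?_
    simp [and_comm, eq_comm]
  have : Nonempty ι := ⟨c s(v, v)⟩
  obtain ⟨i, -, hi⟩ := Finset.exists_le_of_sum_le Finset.univ_nonempty
    (show ∑ i, N i ≤ ∑ i, Nat.card ((colorClass c i).neighborSet v) by omega)
  exact ⟨i, hi⟩

theorem exists_not_cliqueFree_of_arrows_neighborSet [DecidableEq ι] {k : ι → ℕ} {c : Sym2 V → ι}
    {i : ι} {v : V} (hi : 0 < k i)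
    (h : Arrows (update k i (k i - 1)) ((colorClass c i).neighborSet v)) :
    ∃ j, ¬ (colorClass c j).CliqueFree (k j) := by
  classical
  let f := Embedding.subtype (· ∈ (colorClass c i).neighborSet v)
  obtain ⟨j, hj⟩ := h (c ∘ Sym2.map f)
  refine ⟨j, ?_⟩
  obtain rfl | hji := eq_or_ne j i
  · rw [update_self] at hj
    simp only [SimpleGraph.CliqueFree, not_forall, not_not] at hj
    obtain ⟨S, hS⟩ := hj
    have hle : (colorClass (c ∘ Sym2.map f) j).map f ≤ colorClass c j := by
      rw [SimpleGraph.map_le_iff_le_comap]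
      intro u w
      simp
    have hvS : ∀ w ∈ S.map f, (colorClass c j).Adj v w := by
      intro w hw
      obtain ⟨w, -, rfl⟩ := Finset.mem_map.1 hw
      exact w.2
    have hclique := (hS.map.mono hle).insert hvS
    rw [Nat.sub_add_cancel hi] at hclique
    exact hclique.not_cliqueFree
  · rw [update_of_ne hji] at hj
    exact mt (colorClass_comp_map_cliqueFree f) hj

theorem arrows_of_sum_lt_card [Fintype ι] [DecidableEq ι] [Fintype V] {k N : ι → ℕ}
    (hk : ∀ i, 0 < k i) (hN : ∀ i, Arrows (update k i (k i - 1)) (Fin (N i)))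
    (hV : ∑ i, N i < Fintype.card V) : Arrows k V := by
  intro c
  obtain ⟨v⟩ : Nonempty V := Fintype.card_pos_iff.1 (by omega)
  obtain ⟨i, hi⟩ := exists_le_card_neighborSet_colorClass hV c v
  exact exists_not_cliqueFree_of_arrows_neighborSet (hk i)
    ((hN i).of_embedding ((Fin.castLEEmb hi).trans (Finite.equivFin _).symm.toEmbedding))

theorem exists_arrows_fin [Finite ι] (k : ι → ℕ) : ∃ N, Arrows k (Fin N) := by
  classical
  have := Fintype.ofFinite ι
  induction k using WellFoundedLT.induction with
  | _ k ih =>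
  by_cases hk : ∀ i, 0 < k i
  · choose N hN using fun i => ih (update k i (k i - 1))
      (update_lt_self_iff.2 (Nat.sub_one_lt (hk i).ne'))
    exact ⟨∑ i, N i + 1, arrows_of_sum_lt_card hk hN (by simp)⟩
  · push Not at hk
    obtain ⟨i, hi⟩ := hk
    exact ⟨0, fun _ => ⟨i, by simp [Nat.le_zero.1 hi]⟩⟩

theorem arrows_fin_ramseyNumber [Finite ι] (k : ι → ℕ) : Arrows k (Fin (ramseyNumber k)) := by
  obtain ⟨N, hN⟩ := exists_arrows_fin k
  exact (Nat.sInf_mem (s := {N | 0 < N ∧ Arrows k (Fin N)})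
    ⟨N + 1, N.succ_pos, hN.of_embedding Fin.castSuccEmb⟩).2

theorem ramseyNumber_le_card_iff [Finite ι] [Fintype V] {k : ι → ℕ} (hk : ∀ i, 0 < k i) :
    ramseyNumber k ≤ Fintype.card V ↔ Arrows k V := by
  refine ⟨fun h => ?_, fun h => Nat.sInf_le ⟨?_, h.of_embedding (Fintype.equivFin V).toEmbedding⟩⟩
  · exact (arrows_fin_ramseyNumber k).of_embedding
      ((Fin.castLEEmb h).trans (Fintype.equivFin V).symm.toEmbedding)
  · have := h.nonempty hk
    exact Fintype.card_pos

theorem card_lt_ramseyNumber_iff [Finite ι] [Fintype V] {k : ι → ℕ} (hk : ∀ i, 0 < k i) :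
    Fintype.card V < ramseyNumber k ↔ ¬ Arrows k V := by
  rw [← ramseyNumber_le_card_iff hk, not_le]

theorem not_arrows_fin_ramseyNumber_sub_one [Finite ι] {k : ι → ℕ} (hk : ∀ i, 0 < k i) :
    ¬ Arrows k (Fin (ramseyNumber k - 1)) := by
  obtain ⟨v⟩ := (arrows_fin_ramseyNumber k).nonempty hk
  rw [← card_lt_ramseyNumber_iff hk, Fintype.card_fin]
  have := v.pos
  omega

/-- The lexicographic product of two edge colorings: pairs of vertices in the same fiber of the
first projection are colored by `d`, all others by `c`. -/
noncomputable def lexColoring (c : Sym2 V → ι) (d : Sym2 W → κ) :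
    Sym2 (V × W) → ι ⊕ κ :=
  open Classical in fun e =>
    if (e.map Prod.fst).IsDiag then Sum.inr (d (e.map Prod.snd)) else Sum.inl (c (e.map Prod.fst))

theorem lexColoring_mk (c : Sym2 V → ι) (d : Sym2 W → κ) (p q : V × W) [Decidable (p.1 = q.1)] :
    lexColoring c d s(p, q) =
      if p.1 = q.1 then Sum.inr (d s(p.2, q.2)) else Sum.inl (c s(p.1, q.1)) := by
  simp [lexColoring]

theorem colorClass_lexColoring_inl_cliqueFree {c : Sym2 V → ι} (d : Sym2 W → κ) {i : ι} {n : ℕ}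
    (h : (colorClass c i).CliqueFree n) :
    (colorClass (lexColoring c d) (Sum.inl i)).CliqueFree n := by
  classical
  refine cliqueFree_of_hom ⟨Prod.fst, fun {p q} hpq => ?_⟩ h
  rw [colorClass_adj, lexColoring_mk] at hpq
  grind [colorClass_adj]

theorem colorClass_lexColoring_inr_cliqueFree (c : Sym2 V → ι) {d : Sym2 W → κ} {j : κ} {n : ℕ}
    (h : (colorClass d j).CliqueFree n) :
    (colorClass (lexColoring c d) (Sum.inr j)).CliqueFree n := by
  classical
  refine cliqueFree_of_hom ⟨Prod.snd, fun {p q} hpq => ?_⟩ h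
  rw [colorClass_adj, lexColoring_mk] at hpq
  grind [colorClass_adj, Prod.ext_iff]

theorem not_arrows_prod {k : ι → ℕ} {l : κ → ℕ} (hV : ¬ Arrows k V) (hW : ¬ Arrows l W) :
    ¬ Arrows (Sum.elim k l) (V × W) := by
  simp only [Arrows, not_forall, not_exists, not_not] at hV hW ⊢
  obtain ⟨c, hc⟩ := hV
  obtain ⟨d, hd⟩ := hW
  exact ⟨lexColoring c d, Sum.rec
    (fun i => colorClass_lexColoring_inl_cliqueFree d (hc i))
    (fun j => colorClass_lexColoring_inr_cliqueFree c (hd j))⟩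

theorem mul_lt_ramseyNumber_sumElim [Finite ι] [Finite κ] {k : ι → ℕ} {l : κ → ℕ}
    (hk : ∀ i, 0 < k i) (hl : ∀ j, 0 < l j) :
    (ramseyNumber k - 1) * (ramseyNumber l - 1) < ramseyNumber (Sum.elim k l) := by
  have h := not_arrows_prod (not_arrows_fin_ramseyNumber_sub_one hk)
    (not_arrows_fin_ramseyNumber_sub_one hl)
  rw [← card_lt_ramseyNumber_iff (Sum.rec hk hl)] at h
  simpa using h

theorem not_arrows_pi [Nonempty ι] {k : ι → ℕ} {α : ι → Type*} [∀ i, Fintype (α i)]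
    (hα : ∀ i, Fintype.card (α i) < k i) : ¬ Arrows k (∀ i, α i) := by
  have hdiff (e : Sym2 (∀ i, α i)) : ∃ i, ¬ e.IsDiag → ¬ (e.map (eval i)).IsDiag := by
    induction e with
    | _ u v =>
    by_cases huv : u = v
    · simp [huv]
    · simpa [huv] using Function.ne_iff.1 huv
  choose c hc using hdiff
  intro h
  obtain ⟨i, hi⟩ := h c
  refine hi (cliqueFree_of_hom (G := (⊤ : SimpleGraph (α i))) ⟨eval i, fun {u v} huv => ?_⟩
    (SimpleGraph.cliqueFree_of_card_lt (hα i)))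
  obtain ⟨rfl, hne⟩ := colorClass_adj.1 huv
  exact hc s(u, v) (Sym2.mk_isDiag_iff.not.2 hne)

end Arrows

section DiagRamsey

theorem ramseyProp_iff_arrows {r N : ℕ} {k : Fin r → ℕ} :
    ramseyProp k N ↔ Arrows k (Fin N) := by
  simp only [ramseyProp, Arrows, not_cliqueFree_colorClass_iff]

theorem multiRamsey_eq_ramseyNumber {r : ℕ} (k : Fin r → ℕ) :
    multiRamsey k = ramseyNumber k := by
  simp only [multiRamsey, ramseyNumber, ramseyProp_iff_arrows]

theorem diagRamsey_eq_ramseyNumber {ι : Type*} [Fintype ι] {r : ℕ} (hr : Fintype.card ι = r)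
    (k : ℕ) : diagRamsey r k = ramseyNumber (fun _ : ι => k) :=
  (multiRamsey_eq_ramseyNumber _).trans
    (ramseyNumber_comp_equiv (fun _ : Fin r => k) (Fintype.equivFinOfCardEq hr)).symm

theorem pow_lt_diagRamsey {r : ℕ} (hr : 0 < r) (m : ℕ) : m ^ r < diagRamsey r (m + 1) := by
  have : Nonempty (Fin r) := ⟨⟨0, hr⟩⟩
  have h : ¬ Arrows (fun _ : Fin r => m + 1) (Fin r → Fin m) := not_arrows_pi (by simp)
  rw [← card_lt_ramseyNumber_iff (by simp)] at h
  simpa [diagRamsey_eq_ramseyNumber (Fintype.card_fin r)] using h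

theorem two_le_diagRamsey {r k : ℕ} (hr : 0 < r) (hk : 2 ≤ k) : 2 ≤ diagRamsey r k := by
  obtain ⟨m, rfl⟩ := Nat.exists_eq_add_of_le' hk
  exact (Nat.one_le_pow r (m + 1) m.succ_pos).trans_lt (pow_lt_diagRamsey hr (m + 1))

theorem diagRamsey_two_le (r : ℕ) : diagRamsey r 2 ≤ 2 := by
  refine Nat.sInf_le ⟨two_pos, fun c => ⟨c s(0, 1), Finset.univ, by simp, ?_⟩⟩
  intro u _ v _ huv
  fin_cases u <;> fin_cases v <;> simp_all [Sym2.eq_swap]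

theorem diagRamsey_two {r : ℕ} (hr : 0 < r) : diagRamsey r 2 = 2 :=
  (diagRamsey_two_le r).antisymm (two_le_diagRamsey hr le_rfl)

end DiagRamsey

section DecreasingConjecture

open Function

theorem DC.ramseyNumber_update_le (hDC : DC) {ι : Type*} [Finite ι] [DecidableEq ι] {k : ι → ℕ}
    (hk : ∀ l, 2 ≤ k l) {i j : ι} (hij : i ≠ j) (hi : 3 ≤ k i) (hle : k i ≤ k j) :
    ramseyNumber (update (update k i (k i - 1)) j (k j + 1)) ≤ ramseyNumber k := by
  have := Fintype.ofFinite ι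
  let e := Fintype.equivFin ι
  have h := hDC _ (Fintype.one_lt_card_iff.2 ⟨i, j, hij⟩) (k ∘ e.symm) (fun l => hk _) (e i) (e j)
    (by simpa using hij) (by simpa using hi) (by simpa using hle)
  rw [multiRamsey_eq_ramseyNumber, multiRamsey_eq_ramseyNumber, ramseyNumber_comp_equiv,
    ← ramseyNumber_comp_equiv _ e] at h
  convert h using 2
  funext l
  simp only [comp_apply, e.apply_eq_iff_eq, e.symm_apply_apply, update_apply]
  grind

theorem DC.ramseyNumber_sumElim_le (hDC : DC) {α : Type*} [Finite α] {k l : α → ℕ}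
    (hk : ∀ a, 3 ≤ k a) (hkl : ∀ a, k a ≤ l a) :
    ramseyNumber (Sum.elim (fun a => k a - 1) (fun a => l a + 1)) ≤
      ramseyNumber (Sum.elim k l) := by
  classical
  have := Fintype.ofFinite α
  suffices h : ∀ t : Finset α, ramseyNumber (Sum.elim (t.piecewise (fun a => k a - 1) k)
      (t.piecewise (fun a => l a + 1) l)) ≤ ramseyNumber (Sum.elim k l) by
    simpa using h Finset.univ
  intro t
  induction t using Finset.induction_on with
  | empty => simp
  | insert a t ha ih =>
    have hstep := hDC.ramseyNumber_update_le (i := Sum.inl a) (j := Sum.inr a)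
      (k := Sum.elim (t.piecewise (fun a => k a - 1) k) (t.piecewise (fun a => l a + 1) l))
      (by
        rintro (b | b) <;> have := hk b <;> have := hkl b <;>
          simp only [Sum.elim_inl, Sum.elim_inr, Finset.piecewise] <;> split_ifs <;> omega)
      (by simp) (by simpa [ha] using hk a) (by simpa [ha] using hkl a)
    rw [Sum.update_elim_inl, Sum.update_elim_inr, Sum.elim_inl, Sum.elim_inr,
      Finset.piecewise_eq_of_notMem _ _ _ ha, Finset.piecewise_eq_of_notMem _ _ _ ha] at hstep
    rw [Finset.piecewise_insert, Finset.piecewise_insert]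
    exact hstep.trans ih

theorem DC.sub_one_mul_sub_one_lt (hDC : DC) {r k : ℕ} (hk : 2 ≤ k) :
    (diagRamsey r k - 1) * (diagRamsey r (k + 2) - 1) < diagRamsey (2 * r) (k + 1) := by
  have hcard : Fintype.card (Fin r ⊕ Fin r) = 2 * r := by simp [two_mul]
  rw [diagRamsey_eq_ramseyNumber (Fintype.card_fin r), diagRamsey_eq_ramseyNumber hcard,
    diagRamsey_eq_ramseyNumber (Fintype.card_fin r)]
  calc _ < ramseyNumber (Sum.elim (fun _ : Fin r => k) (fun _ : Fin r => k + 2)) :=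
        mul_lt_ramseyNumber_sumElim (fun _ => by omega) (fun _ => by omega)
    _ ≤ ramseyNumber (Sum.elim (fun _ : Fin r => k + 1) (fun _ : Fin r => k + 1)) :=
        hDC.ramseyNumber_sumElim_le (k := fun _ => k + 1) (fun _ => by omega) fun _ => le_rfl
    _ = ramseyNumber (fun _ : Fin r ⊕ Fin r => k + 1) := by rw [Sum.elim_lam_const_lam_const]

theorem DC.diagRamsey_mul_diagRamsey_le (hDC : DC) {r k : ℕ} (hr : 0 < r) (hk : 2 ≤ k) :
    diagRamsey r k * diagRamsey r (k + 2) ≤ 4 * diagRamsey (2 * r) (k + 1) := by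
  have hk₀ := two_le_diagRamsey hr hk
  have hk₂ := two_le_diagRamsey hr (show 2 ≤ k + 2 by omega)
  calc diagRamsey r k * diagRamsey r (k + 2)
      ≤ (2 * (diagRamsey r k - 1)) * (2 * (diagRamsey r (k + 2) - 1)) := by gcongr <;> omega
    _ = 4 * ((diagRamsey r k - 1) * (diagRamsey r (k + 2) - 1)) := by ring
    _ ≤ 4 * diagRamsey (2 * r) (k + 1) := by
        gcongr
        exact (hDC.sub_one_mul_sub_one_lt hk).le

end DecreasingConjecture

section Roots

variable {a b c : ℕ → ℝ≥0∞} {A B C : ℝ≥0∞}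

theorem tendsto_const_rpow_one_div {K : ℝ≥0∞} (h₀ : K ≠ 0) (h : K ≠ ⊤) :
    Tendsto (fun r : ℕ => K ^ (1 / (r : ℝ))) atTop (𝓝 1) := by
  lift K to NNReal using h
  rw [ENNReal.coe_ne_zero] at h₀
  have hK : Tendsto (fun r : ℕ => K ^ (1 / (r : ℝ))) atTop (𝓝 (K ^ (0 : ℝ))) :=
    tendsto_const_nhds.nnrpow tendsto_one_div_atTop_nhds_zero_nat (Or.inl h₀)
  simpa [← ENNReal.coe_rpow_of_ne_zero h₀] using ENNReal.tendsto_coe.2 hK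

theorem le_of_tendsto_rpow_one_div_of_pow_le {m : ℝ≥0∞}
    (ha : Tendsto (fun r : ℕ => a r ^ (1 / (r : ℝ))) atTop (𝓝 A))
    (hle : ∀ᶠ r in atTop, m ^ r ≤ a r) : m ≤ A := by
  refine ge_of_tendsto ha ?_
  filter_upwards [hle, eventually_ne_atTop 0] with r hle hr
  calc m = (m ^ r) ^ (1 / (r : ℝ)) := by rw [one_div, ENNReal.pow_rpow_inv_natCast hr]
    _ ≤ a r ^ (1 / (r : ℝ)) := by gcongr

theorem mul_le_sq_of_tendsto_rpow_one_div {K : ℝ≥0∞} (hK : K ≠ ⊤)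
    (ha : Tendsto (fun r : ℕ => a r ^ (1 / (r : ℝ))) atTop (𝓝 A))
    (hb : Tendsto (fun r : ℕ => b r ^ (1 / (r : ℝ))) atTop (𝓝 B))
    (hc : Tendsto (fun r : ℕ => c r ^ (1 / (r : ℝ))) atTop (𝓝 C))
    (hle : ∀ᶠ r in atTop, a r * b r ≤ K * c (2 * r)) : A * B ≤ C ^ 2 := by
  obtain rfl | hA := eq_or_ne A 0
  · simp
  obtain rfl | hB := eq_or_ne B 0
  · simp
  -- `max K 1` in place of `K`, because `0 ^ (1 / r)` does not tend to `1`
  have hK₁ := tendsto_const_rpow_one_div (K := max K 1) (by simp) (by simp [hK])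
  have hc₂ : Tendsto (fun r : ℕ => c (2 * r) ^ (1 / (r : ℝ))) atTop (𝓝 (C ^ 2)) := by
    have hdouble : Tendsto (fun r : ℕ => 2 * r) atTop atTop :=
      tendsto_id.const_mul_atTop' two_pos
    refine (((ENNReal.continuous_pow 2).tendsto C).comp (hc.comp hdouble)).congr fun r => ?_
    rw [Function.comp_apply, Function.comp_apply, ← ENNReal.rpow_natCast, ← ENNReal.rpow_mul]
    congr 1
    push_cast
    ring
  have hright := ENNReal.Tendsto.mul hK₁ (Or.inl one_ne_zero) hc₂ (Or.inr ENNReal.one_ne_top)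
  rw [one_mul] at hright
  refine le_of_tendsto_of_tendsto (ENNReal.Tendsto.mul ha (Or.inl hA) hb (Or.inl hB)) hright ?_
  filter_upwards [hle] with r hle
  have hr : 0 ≤ 1 / (r : ℝ) := by positivity
  rw [← ENNReal.mul_rpow_of_nonneg _ _ hr, ← ENNReal.mul_rpow_of_nonneg _ _ hr]
  exact ENNReal.rpow_le_rpow (hle.trans (by gcongr; exact le_max_left K 1)) hr

theorem tendsto_toReal_of_tendsto_rpow_one_div {a : ℕ → ℕ} (hA : A ≠ ⊤)
    (ha : Tendsto (fun r : ℕ => (a r : ℝ≥0∞) ^ (1 / (r : ℝ))) atTop (𝓝 A)) :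
    Tendsto (fun r : ℕ => (a r : ℝ) ^ (1 / (r : ℝ))) atTop (𝓝 A.toReal) :=
  ((ENNReal.tendsto_toReal hA).comp ha).congr fun r => by simp [← ENNReal.toReal_rpow]

end Roots

section LogConcave

/-- Log-concavity of a sequence, in the multiplicative form that needs no logarithm. -/
def IsLogConcave {M : Type*} [Monoid M] [LE M] (x : ℕ → M) : Prop :=
  ∀ n, x n * x (n + 2) ≤ x (n + 1) ^ 2

variable {x : ℕ → ℝ≥0∞}

theorem IsLogConcave.ne_top (hx : IsLogConcave x) (hx₀ : ∀ n, x n ≠ 0) (h₀ : x 0 ≠ ⊤)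
    (h₁ : x 1 ≠ ⊤) (n : ℕ) : x n ≠ ⊤ := by
  induction n using Nat.twoStepInduction with
  | zero => exact h₀
  | one => exact h₁
  | more n _ ih =>
    intro htop
    have h := hx n
    rw [htop, ENNReal.mul_top (hx₀ n), top_le_iff] at h
    exact ENNReal.pow_ne_top ih h

theorem IsLogConcave.succ_le_of_succ_le (hx : IsLogConcave x) {n : ℕ} (h₀ : x n ≠ 0)
    (htop : x n ≠ ⊤) (hle : x (n + 1) ≤ x n) : x (n + 2) ≤ x (n + 1) := by
  rw [← ENNReal.mul_le_mul_iff_right h₀ htop]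
  calc x n * x (n + 2) ≤ x (n + 1) ^ 2 := hx n
    _ = x (n + 1) * x (n + 1) := sq _
    _ ≤ x n * x (n + 1) := by gcongr

theorem IsLogConcave.strictMono (hx : IsLogConcave x) (hx₀ : ∀ n, x n ≠ 0) (htop : ∀ n, x n ≠ ⊤)
    (hlim : Tendsto x atTop (𝓝 ⊤)) : StrictMono x := by
  refine strictMono_nat_of_lt_succ fun n => ?_
  by_contra! hle
  have hdecr : ∀ m ≥ n, x (m + 1) ≤ x m :=
    Nat.le_induction hle fun m _ => hx.succ_le_of_succ_le (hx₀ m) (htop m)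
  have hbound : ∀ m ≥ n, x m ≤ x n :=
    Nat.le_induction le_rfl fun m hm ih => (hdecr m hm).trans ih
  have hlimle : ⊤ ≤ x n := le_of_tendsto hlim (eventually_atTop.2 ⟨n, hbound⟩)
  exact htop n (top_le_iff.1 hlimle)

end LogConcave

section Limits

theorem natCast_le_of_tendsto_diagRamsey {m : ℕ} {ℓ : ℝ≥0∞}
    (h : Tendsto (fun r : ℕ => (diagRamsey r (m + 1) : ℝ≥0∞) ^ (1 / (r : ℝ))) atTop (𝓝 ℓ)) :
    (m : ℝ≥0∞) ≤ ℓ := by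
  refine le_of_tendsto_rpow_one_div_of_pow_le h ?_
  filter_upwards [eventually_gt_atTop 0] with r hr
  exact_mod_cast (pow_lt_diagRamsey hr m).le

theorem tendsto_diagRamsey_two :
    Tendsto (fun r : ℕ => (diagRamsey r 2 : ℝ≥0∞) ^ (1 / (r : ℝ))) atTop (𝓝 1) := by
  refine (tendsto_const_rpow_one_div (K := 2) (by simp) (by simp)).congr' ?_
  filter_upwards [eventually_gt_atTop 0] with r hr
  simp [diagRamsey_two hr]

theorem DC.isLogConcave_limit (hDC : DC) {x : ℕ → ℝ≥0∞}
    (hx : ∀ n, Tendsto (fun r : ℕ => (diagRamsey r (n + 2) : ℝ≥0∞) ^ (1 / (r : ℝ))) atTop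
      (𝓝 (x n))) : IsLogConcave x := by
  intro n
  refine mul_le_sq_of_tendsto_rpow_one_div (K := 4) (by simp) (hx n) (hx (n + 2)) (hx (n + 1)) ?_
  filter_upwards [eventually_gt_atTop 0] with r hr
  exact_mod_cast hDC.diagRamsey_mul_diagRamsey_le hr (Nat.le_add_left 2 n)

end Limits

/-- if DC holds and `L_3` is finite, then for every `k ≥ 3` the real
sequence `r ↦ R_r(k)^{1/r} / R_r(k−1)^{1/r}` converges to the finite real number
`L_k / L_{k−1}`, and this limit is strictly greater than `1`.
Here `L j` is the limit of `r ↦ R_r(j)^{1/r}` in `[0, ∞]`. -/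
theorem stmt12 (hDC : DC) (L : ℕ → ℝ≥0∞)
    (hL : ∀ j, 2 ≤ j →
      Tendsto (fun r : ℕ => ((diagRamsey r j : ℝ≥0∞)) ^ (1 / (r : ℝ))) atTop (𝓝 (L j)))
    (h3 : L 3 ≠ ⊤) (k : ℕ) (hk : 3 ≤ k) :
    L (k - 1) ≠ ⊤ ∧ L k ≠ ⊤ ∧
    Tendsto
      (fun r : ℕ =>
        ((diagRamsey r k : ℝ) ^ (1 / (r : ℝ))) / ((diagRamsey r (k - 1) : ℝ) ^ (1 / (r : ℝ))))
      atTop (𝓝 ((L k).toReal / (L (k - 1)).toReal)) ∧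
    1 < (L k).toReal / (L (k - 1)).toReal := by
  obtain ⟨n, rfl⟩ := Nat.exists_eq_add_of_le' hk
  let x (m : ℕ) : ℝ≥0∞ := L (m + 2)
  have hx (m : ℕ) :
      Tendsto (fun r : ℕ => (diagRamsey r (m + 2) : ℝ≥0∞) ^ (1 / (r : ℝ))) atTop (𝓝 (x m)) :=
    hL (m + 2) (Nat.le_add_left 2 m)
  have hlog : IsLogConcave x := hDC.isLogConcave_limit hx
  have hle (m : ℕ) : ((m + 1 : ℕ) : ℝ≥0∞) ≤ x m := natCast_le_of_tendsto_diagRamsey (hx m)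
  have hx₀ (m : ℕ) : x m ≠ 0 := (lt_of_lt_of_le (by simp) (hle m)).ne'
  have h2 : x 0 = 1 := tendsto_nhds_unique (hx 0) tendsto_diagRamsey_two
  have htop : ∀ m, x m ≠ ⊤ := hlog.ne_top hx₀ (h2 ▸ ENNReal.one_ne_top) h3
  have hlim : Tendsto x atTop (𝓝 ⊤) := tendsto_nhds_top_mono'
    (ENNReal.tendsto_nat_nhds_top.comp (tendsto_add_atTop_nat 1)) hle
  have hmono : StrictMono x := hlog.strictMono hx₀ htop hlim
  have hpos : 0 < (x n).toReal := ENNReal.toReal_pos (hx₀ n) (htop n)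
  exact ⟨htop n, htop (n + 1),
    (tendsto_toReal_of_tendsto_rpow_one_div (htop (n + 1)) (hx (n + 1))).div
      (tendsto_toReal_of_tendsto_rpow_one_div (htop n) (hx n)) hpos.ne',
    (one_lt_div hpos).2 (ENNReal.toReal_strict_mono (htop (n + 1)) (hmono n.lt_succ_self))⟩
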